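/- arXiv:1404.6942 — 2 statements merged into one kernel-verified Lean document; each statement's English description precedes it below -/
import Mathlib

section
/- Let R be a simple unital associative F-algebra with an involution * and an idempotent e such that ee* = e*e = 0 and e + e* = 1, and suppose R is not finite-dimensional as a module over its center Z. Then R is generated as an F-algebra by the set (K ∩ eRe*) ∪ (K ∩ e*Re). -/
/-!
Write `f = star e`, `X` and `Y` for the skew elements of `eRf` and `fRe`, and `U` for the additive
span of the products `XY` in the corner `S = eRe`, a simple ring. For `x` in `S`, `a` in `X` and `b`
in `Y`,
`⁅x, ab⁆ = (xa + a x*) b - a (x* b + bx)`,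
so `U` is a Lie ideal of `S`. By Herstein's theorem, `U` either generates `S` or is central.

Suppose `U` is central. If some product `c = ab` is nonzero, then `τ(x) = (xa + a x*) b` is central
for all `x` in `S`; replacing `a` by `ya + a y*`, one finds that `x τ(y) + y τ(x) - (xy + yx) c` is
central too. So for noncentral `x` the elements `(xc - τ(x)) y + y (xc)` all lie in `Z(S) + Z(S) x`,
which makes `S` finite over `Z(S)`. If `XY = 0`, then `X = 0` or `Y = 0`, so all elements of `eRf`
or all elements of `fRe` are self-adjoint, and this forces `S` or `fRf` to be commutative. In each
case `R` is finite over its center.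

So `X` and `Y` generate `eRe`, and by symmetry `fRf`; since `X` and `Y` are nonzero and `R` is
simple, they also generate `eRf` and `fRe`.
-/

theorem finite_center_of_forall_mem_center {R : Type*} [Ring R]
    (h : ∀ x, x ∈ Subring.center R) : Module.Finite (Subring.center R) R :=
  .of_surjective (Algebra.linearMap (Subring.center R) R) fun x => ⟨⟨x, h x⟩, rfl⟩

section SimpleRing

variable {R : Type*} [Ring R] [IsSimpleRing R]

open scoped Pointwise in
theorem exists_sum_mul_mul_eq_one {w : R} (hw : w ≠ 0) :
    ∃ (n : ℕ) (p s : Fin n → R), ∑ i, p i * w * s i = 1 := by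
  have hone : (1 : R) ∈ AddSubgroup.closure (Set.univ * {w} * Set.univ) :=
    TwoSidedIdeal.mem_span_iff_mem_addSubgroup_closure.1 <|
      IsSimpleRing.one_mem_of_ne_zero_mem _ hw (TwoSidedIdeal.subset_span rfl)
  generalize (1 : R) = x at hone ⊢
  induction hone using AddSubgroup.closure_induction with
  | mem x hx =>
    obtain ⟨_, ⟨p, -, _, rfl, rfl⟩, s, -, rfl⟩ := hx
    exact ⟨1, fun _ => p, fun _ => s, by simp⟩
  | zero => exact ⟨0, 0, 0, by simp⟩
  | add x y _ _ hx hy =>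
    obtain ⟨m, p, s, rfl⟩ := hx
    obtain ⟨n, p', s', rfl⟩ := hy
    exact ⟨m + n, Fin.append p p', Fin.append s s', by simp [Fin.sum_univ_add]⟩
  | neg x _ hx =>
    obtain ⟨n, p, s, rfl⟩ := hx
    exact ⟨n, -p, s, by simp⟩

theorem addSubgroup_eq_top_of_forall_mul_mul_mem {w : R} (hw : w ≠ 0) {A : AddSubgroup R}
    (h : ∀ r s, r * w * s ∈ A) : A = ⊤ := by
  obtain ⟨n, p, s, hps⟩ := exists_sum_mul_mul_eq_one hw
  refine eq_top_iff.2 fun x _ => ?_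
  rw [← one_mul x, ← hps, Finset.sum_mul]
  exact sum_mem fun i _ => mul_assoc (p i * w) (s i) x ▸ h (p i) (s i * x)

theorem eq_zero_or_eq_zero_of_forall_mul_mul_eq_zero {u w : R} (h : ∀ r, u * r * w = 0) :
    u = 0 ∨ w = 0 := by
  refine or_iff_not_imp_right.2 fun hw => ?_
  obtain ⟨n, p, s, hps⟩ := exists_sum_mul_mul_eq_one hw
  calc u = u * ∑ i, p i * w * s i := by rw [hps, mul_one]
    _ = ∑ i, u * p i * w * s i := by simp only [Finset.mul_sum, mul_assoc]
    _ = 0 := by simp only [h, zero_mul, Finset.sum_const_zero]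

theorem eq_zero_of_two_mul_eq_zero (h2 : (2 : R) ≠ 0) {v : R} (hv : 2 * v = 0) : v = 0 :=
  (eq_zero_or_eq_zero_of_forall_mul_mul_eq_zero fun r => by
    rw [← Nat.cast_ofNat, Nat.cast_comm, mul_assoc, Nat.cast_ofNat, hv, mul_zero]).resolve_left h2

theorem mul_mul_mem_of_forall_mul_mul_mem {A : NonUnitalSubring R} {a g h : R} (ha0 : a ≠ 0)
    (ha : a ∈ A) (hga : g * a = a) (hah : a * h = a) (hg : ∀ r, g * r * g ∈ A)
    (hh : ∀ r, h * r * h ∈ A) (r : R) : g * r * h ∈ A := by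
  let B : AddSubgroup R :=
    A.toAddSubgroup.comap ((AddMonoidHom.mulRight h).comp (AddMonoidHom.mulLeft g))
  have htop : B = ⊤ := addSubgroup_eq_top_of_forall_mul_mul_mem ha0 fun r s => by
    have hrs : g * (r * a * s) * h = g * r * g * a * (h * s * h) := by
      calc g * (r * a * s) * h = g * (r * (g * a * h) * s) * h := by rw [hga, hah]
        _ = _ := by noncomm_ring
    change g * (r * a * s) * h ∈ A
    rw [hrs]
    exact mul_mem (mul_mem (hg r) ha) (hh s)
  exact (AddSubgroup.eq_top_iff' _).1 htop r

section Finite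

variable {k : Type*} [CommRing k] [Algebra k R]

theorem finite_of_forall_mul_mul_mem {u w : R} (hu : u ≠ 0) (hw : w ≠ 0) {V : Submodule k R}
    (hV : V.FG) (h : ∀ r, u * r * w ∈ V) : Module.Finite k R := by
  obtain ⟨m, p, s, hps⟩ := exists_sum_mul_mul_eq_one hu
  obtain ⟨n, p', s', hps'⟩ := exists_sum_mul_mul_eq_one hw
  let W : Submodule k R := ⨆ i, ⨆ j, V.map (LinearMap.mulLeftRight k (p i, s' j))
  have hW : W.FG := Submodule.fg_iSup _ fun i => Submodule.fg_iSup _ fun j => hV.map _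
  have hmem : ∀ r, r ∈ W := fun r => by
    have hr : r = ∑ i, ∑ j, p i * (u * (s i * r * p' j) * w) * s' j := by
      calc r = (∑ i, p i * u * s i) * r * ∑ j, p' j * w * s' j := by rw [hps, hps']; simp
        _ = _ := by
          rw [Finset.sum_mul, Finset.sum_mul_sum]
          simp only [mul_assoc]
    rw [hr]
    exact sum_mem fun i _ => sum_mem fun j _ =>
      Submodule.mem_iSup_of_mem i (Submodule.mem_iSup_of_mem j ⟨_, h (s i * r * p' j), by simp⟩)
  exact ⟨(eq_top_iff.2 fun r _ => hmem r : W = ⊤) ▸ hW⟩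

theorem finite_of_forall_mul_add_mul_mem {a x : R} (hx : x ∉ Subring.center R)
    {V : Submodule k R} (hV : V.FG) (h : ∀ y, a * y + y * x ∈ V) : Module.Finite k R := by
  obtain ⟨z, hz⟩ : ∃ z, z * x ≠ x * z := by simpa [Subring.mem_center_iff] using hx
  refine finite_of_forall_mul_mul_mem one_ne_zero (sub_ne_zero.2 hz)
    (hV.sup (hV.map (LinearMap.mulRight k z))) fun r => ?_
  have hr : 1 * r * (z * x - x * z) = (a * (r * z) + r * z * x) - (a * r + r * x) * z := by
    noncomm_ring
  rw [hr]
  exact sub_mem (Submodule.mem_sup_left (h (r * z))) (Submodule.mem_sup_right ⟨_, h r, rfl⟩)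

end Finite

theorem finite_center_of_forall_mul_add_mul_sub_mem_center {c : R} (hc : c ∈ Subring.center R)
    (hc0 : c ≠ 0) {τ : R → R} (hτ : ∀ x, τ x ∈ Subring.center R)
    (h : ∀ x y, x * τ y + y * τ x - (x * y + y * x) * c ∈ Subring.center R) :
    Module.Finite (Subring.center R) R := by
  by_cases hcomm : ∀ x, x ∈ Subring.center R
  · exact finite_center_of_forall_mem_center hcomm
  push Not at hcomm
  obtain ⟨x, hx⟩ := hcomm
  have hxc : x * c ∉ Subring.center R := fun hxc => by
    obtain ⟨d, hd⟩ := (IsSimpleRing.isField_center R).mul_inv_cancel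
      (a := ⟨c, hc⟩) (Subtype.coe_ne_coe.1 hc0)
    have hcd : c * d = 1 := congrArg Subtype.val hd
    exact hx (by simpa only [mul_assoc, hcd, mul_one] using mul_mem hxc d.2)
  let V := Submodule.span (Subring.center R) {1, x}
  have center_le : ∀ {z}, z ∈ Subring.center R → z ∈ V := fun {z} hz => by
    simpa [Subring.smul_def] using V.smul_mem ⟨z, hz⟩ (Submodule.subset_span (.inl rfl))
  refine finite_of_forall_mul_add_mul_mem (a := x * c - τ x) hxc (V := V)
    (Submodule.fg_span (Set.toFinite _)) fun y => ?_
  have hy : (x * c - τ x) * y + y * (x * c) =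
      τ y * x - (x * τ y + y * τ x - (x * y + y * x) * c) := by
    have hcy := Subring.mem_center_iff.1 hc y
    have hτx := Subring.mem_center_iff.1 (hτ x) y
    have hτy := Subring.mem_center_iff.1 (hτ y) x
    rw [sub_mul, mul_assoc, ← hcy, ← hτx, hτy]
    noncomm_ring
  rw [hy]
  exact sub_mem (V.smul_mem ⟨τ y, hτ y⟩ (Submodule.subset_span (.inr rfl))) (center_le (h x y))

end SimpleRing

section Lie

attribute [local instance] LieRing.ofAssociativeRing

theorem lie_mem_closure_of_lieIdeal {k R : Type*} [CommRing k] [Ring R] [Algebra k R]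
    (U : LieIdeal k R) (x : R) {a : R} (ha : a ∈ NonUnitalSubring.closure (U : Set R)) :
    ⁅x, a⁆ ∈ NonUnitalSubring.closure (U : Set R) := by
  induction ha using NonUnitalSubring.closure_induction with
  | mem a ha => exact NonUnitalSubring.subset_closure (U.lie_mem ha)
  | zero => simp
  | add a b _ _ hxa hxb => rw [lie_add]; exact add_mem hxa hxb
  | neg a _ hxa => rw [lie_neg]; exact neg_mem hxa
  | mul a b ha hb hxa hxb =>
    have leibniz : ⁅x, a * b⁆ = ⁅x, a⁆ * b + a * ⁅x, b⁆ := by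
      simp only [Ring.lie_def]; noncomm_ring
    rw [leibniz]
    exact add_mem (mul_mem hxa hb) (mul_mem ha hxb)

variable {k R : Type*} [CommRing k] [Ring R] [IsSimpleRing R] [Algebra k R]

theorem closure_lieIdeal_eq_top_of_lie_ne_zero (U : LieIdeal k R) {p q : R} (hp : p ∈ U)
    (hq : q ∈ U) (hpq : ⁅p, q⁆ ≠ 0) : NonUnitalSubring.closure (U : Set R) = ⊤ := by
  set A := NonUnitalSubring.closure (U : Set R)
  have hUA : ∀ {u}, u ∈ U → u ∈ A := fun hu => NonUnitalSubring.subset_closure hu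
  have lie_mul_mem : ∀ r, ⁅p, q⁆ * r ∈ A := fun r => by
    have hr : ⁅p, q⁆ * r = ⁅p, q * r⁆ - q * ⁅p, r⁆ := by simp only [Ring.lie_def]; noncomm_ring
    rw [hr]
    exact sub_mem (hUA (lie_mem_left k R U p _ hp))
      (mul_mem (hUA hq) (hUA (lie_mem_left k R U p r hp)))
  have mul_lie_mul_mem : ∀ r s, r * ⁅p, q⁆ * s ∈ A.toAddSubgroup := fun r s => by
    have hrs : r * ⁅p, q⁆ * s = ⁅r, ⁅p, q⁆ * s⁆ + ⁅p, q⁆ * (s * r) := by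
      simp only [Ring.lie_def]; noncomm_ring
    rw [hrs]
    exact add_mem (lie_mem_closure_of_lieIdeal U r (lie_mul_mem s)) (lie_mul_mem (s * r))
  exact NonUnitalSubring.toAddSubgroup_injective
    (addSubgroup_eq_top_of_forall_mul_mul_mem hpq mul_lie_mul_mem)

theorem mem_center_of_forall_lie_lie_eq_zero (h2 : (2 : R) ≠ 0) {u : R}
    (h : ∀ x : R, ⁅u, ⁅u, x⁆⁆ = 0) : u ∈ Subring.center R := by
  -- Apply the derivation `⁅u, ·⁆` twice to a product `y * z`.
  have lie_mul_lie : ∀ y z : R, ⁅u, y⁆ * ⁅u, z⁆ = 0 := fun y z => by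
    refine eq_zero_of_two_mul_eq_zero h2 ?_
    calc (2 : R) * (⁅u, y⁆ * ⁅u, z⁆) = ⁅u, ⁅u, y * z⁆⁆ - ⁅u, ⁅u, y⁆⁆ * z - y * ⁅u, ⁅u, z⁆⁆ := by
          simp only [Ring.lie_def]; noncomm_ring
      _ = 0 := by simp only [h, zero_mul, mul_zero, sub_zero]
  have lie_eq_zero : ∀ x : R, ⁅u, x⁆ = 0 := fun x => or_self_iff.1 <|
    eq_zero_or_eq_zero_of_forall_mul_mul_eq_zero fun r => by
      calc ⁅u, x⁆ * r * ⁅u, x⁆ = ⁅u, x⁆ * ⁅u, r * x⁆ - ⁅u, x⁆ * ⁅u, r⁆ * x := by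
            simp only [Ring.lie_def]; noncomm_ring
        _ = 0 := by simp only [lie_mul_lie, zero_mul, sub_zero]
  exact Subring.mem_center_iff.2 fun x => (sub_eq_zero.1 (lie_eq_zero x)).symm

/-- A theorem of Herstein. -/
theorem lieIdeal_subset_center_or_closure_eq_top (h2 : (2 : R) ≠ 0) (U : LieIdeal k R) :
    (U : Set R) ⊆ Subring.center R ∨ NonUnitalSubring.closure (U : Set R) = ⊤ := by
  by_cases hcomm : ∀ p ∈ U, ∀ q ∈ U, ⁅p, q⁆ = 0
  · exact .inl fun u hu => mem_center_of_forall_lie_lie_eq_zero h2 fun x =>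
      hcomm u hu _ (lie_mem_left k R U u x hu)
  · push Not at hcomm
    obtain ⟨p, hp, q, hq, hpq⟩ := hcomm
    exact .inr (closure_lieIdeal_eq_top_of_lie_ne_zero U hp hq hpq)

end Lie

section Corner

variable {R : Type*} [Ring R] {e : R} (he : IsIdempotentElem e)

/-- The inclusion of the corner `eRe` into `R`. -/
def ofCorner : he.Corner →ₙ+* R :=
  NonUnitalSubringClass.subtype (NonUnitalRing.corner e)

/-- The Peirce projection `r ↦ ere` of `R` onto the corner `eRe`. -/
def toCorner : R →+ he.Corner where
  toFun r := ⟨e * r * e, r, rfl⟩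
  map_zero' := Subtype.ext (by simp; rfl)
  map_add' r s := Subtype.ext (by simp [mul_add, add_mul]; rfl)

theorem ofCorner_injective : Function.Injective (ofCorner he) :=
  Subtype.val_injective

@[simp]
theorem ofCorner_one : ofCorner he 1 = e :=
  rfl

@[simp]
theorem ofCorner_toCorner (r : R) : ofCorner he (toCorner he r) = e * r * e :=
  rfl

@[simp]
theorem mul_ofCorner (x : he.Corner) : e * ofCorner he x = ofCorner he x :=
  ((Subsemigroup.mem_corner_iff he).1 x.2).1

@[simp]
theorem ofCorner_mul (x : he.Corner) : ofCorner he x * e = ofCorner he x :=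
  ((Subsemigroup.mem_corner_iff he).1 x.2).2

@[simp]
theorem toCorner_ofCorner (x : he.Corner) : toCorner he (ofCorner he x) = x :=
  ofCorner_injective he (by simp)

theorem toCorner_mul_ofCorner_mul (r s : R) (x : he.Corner) :
    toCorner he (r * ofCorner he x * s) = toCorner he r * x * toCorner he s :=
  ofCorner_injective he <| by
    calc e * (r * ofCorner he x * s) * e = e * (r * (e * ofCorner he x * e) * s) * e := by simp
      _ = e * r * e * ofCorner he x * (e * s * e) := by noncomm_ring

variable [IsSimpleRing R]

theorem isSimpleRing_corner (he0 : e ≠ 0) : IsSimpleRing he.Corner := by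
  have : Nontrivial he.Corner := ⟨1, 0, fun h => he0 (congrArg (ofCorner he) h)⟩
  refine .of_eq_bot_or_eq_top fun I => or_iff_not_imp_left.2 fun hI => ?_
  obtain ⟨w, hwI, hw⟩ := SetLike.exists_of_lt (bot_lt_iff_ne_bot.2 hI)
  have hw0 : ofCorner he w ≠ 0 := (map_ne_zero_iff _ (ofCorner_injective he)).2 hw
  have htop : (AddSubgroup.ofClass I).comap (toCorner he) = ⊤ :=
    addSubgroup_eq_top_of_forall_mul_mul_mem hw0 fun r s => by
      rw [AddSubgroup.mem_comap, toCorner_mul_ofCorner_mul]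
      exact I.mul_mem_right _ _ (I.mul_mem_left _ _ hwI)
  refine I.one_mem_iff.1 ?_
  have hone : toCorner he (ofCorner he 1) ∈ I := (AddSubgroup.eq_top_iff' _).1 htop _
  rwa [toCorner_ofCorner] at hone

theorem exists_mem_center_mul_eq_ofCorner (he0 : e ≠ 0) {c : he.Corner}
    (hc : c ∈ Subring.center he.Corner) : ∃ z ∈ Subring.center R, z * e = ofCorner he c := by
  obtain ⟨n, p, s, hps⟩ := exists_sum_mul_mul_eq_one he0
  have mul_comm_c : ∀ r, ofCorner he c * r * e = e * r * ofCorner he c := fun r => by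
    have := congrArg (ofCorner he) (Subring.mem_center_iff.1 hc (toCorner he r))
    simp only [map_mul, ofCorner_toCorner] at this
    rwa [mul_assoc _ e, mul_ofCorner, ← mul_assoc, ← mul_assoc, ofCorner_mul, eq_comm] at this
  let z := ∑ i, p i * ofCorner he c * s i
  have hz : ∀ r, z * r * e = r * ofCorner he c := fun r => by
    calc z * r * e = ∑ i, p i * (ofCorner he c * (s i * r) * e) := by
          simp only [z, Finset.sum_mul, mul_assoc]
      _ = (∑ i, p i * e * s i) * r * ofCorner he c := by
          simp only [mul_comm_c, Finset.sum_mul, mul_assoc]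
      _ = r * ofCorner he c := by rw [hps, one_mul]
  refine ⟨z, Subring.mem_center_iff.2 fun t => ?_, by simpa using hz 1⟩
  refine sub_eq_zero.1 <| (eq_zero_or_eq_zero_of_forall_mul_mul_eq_zero fun r => ?_).resolve_right
    he0
  calc (t * z - z * t) * r * e = t * (z * r * e) - z * (t * r) * e := by noncomm_ring
    _ = 0 := by rw [hz, hz, mul_assoc, sub_self]

theorem finite_center_of_finite_center_corner (he0 : e ≠ 0)
    (hfin : Module.Finite (Subring.center he.Corner) he.Corner) :
    Module.Finite (Subring.center R) R := by
  obtain ⟨⟨t, ht⟩⟩ := hfin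
  classical
  let V := Submodule.span (Subring.center R) (t.image (ofCorner he) : Set R)
  have ofCorner_mem : ∀ x, ofCorner he x ∈ V := fun x => by
    have hx : x ∈ Submodule.span (Subring.center he.Corner) (t : Set he.Corner) := ht ▸ trivial
    induction hx using Submodule.span_induction with
    | mem x hx => exact Submodule.subset_span (Finset.mem_image_of_mem _ hx)
    | zero => rw [map_zero]; exact zero_mem V
    | add x y _ _ hx hy => rw [map_add]; exact add_mem hx hy
    | smul c x _ hx =>
      obtain ⟨z, hz, hze⟩ := exists_mem_center_mul_eq_ofCorner he he0 c.2
      have hcx : ofCorner he (c • x) = (⟨z, hz⟩ : Subring.center R) • ofCorner he x := by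
        rw [Subring.smul_def, smul_eq_mul, map_mul, ← hze, mul_assoc, mul_ofCorner]; rfl
      exact hcx ▸ V.smul_mem _ hx
  exact finite_of_forall_mul_mul_mem he0 he0 (Submodule.fg_span (Finset.finite_toSet _))
    fun r => ofCorner_mem (toCorner he r)

end Corner

section SkewCorner

variable {R : Type*} [Ring R] [StarRing R] {e : R}

/-- The skew elements of the Peirce component `e R e*` of an idempotent `e`. Membership in `e R e*`
is encoded as `e * a = a`: for skew `a`, applying the involution then yields `a * star e = a`. -/
def skewCorner (e : R) : AddSubgroup R where
  carrier := {a | star a = -a ∧ e * a = a}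
  zero_mem' := by simp
  add_mem' := fun ⟨ha, hea⟩ ⟨hb, heb⟩ =>
    ⟨by rw [star_add, ha, hb, neg_add], by rw [mul_add, hea, heb]⟩
  neg_mem' := fun ⟨ha, hea⟩ => ⟨by rw [star_neg, ha], by rw [mul_neg, hea]⟩

theorem mul_star_of_mem_skewCorner {a : R} (ha : a ∈ skewCorner e) : a * star e = a := by
  rw [← neg_inj, ← neg_mul, ← ha.1, ← star_mul, ha.2]

theorem mul_of_mem_skewCorner_star {b : R} (hb : b ∈ skewCorner (star e)) : b * e = b := by
  simpa using mul_star_of_mem_skewCorner hb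

theorem mem_skewCorner_iff_exists (he : IsIdempotentElem e) {a : R} :
    a ∈ skewCorner e ↔ star a = -a ∧ ∃ r, a = e * r * star e := by
  refine and_congr_right fun ha => ⟨fun hea => ⟨a, ?_⟩, ?_⟩
  · rw [hea, mul_star_of_mem_skewCorner ⟨ha, hea⟩]
  · rintro ⟨r, rfl⟩
    rw [← mul_assoc, ← mul_assoc, he.eq]

theorem mul_add_mul_star_mem_skewCorner {a x : R} (ha : a ∈ skewCorner e) (hx : e * x = x) :
    x * a + a * star x ∈ skewCorner e := by
  refine ⟨?_, by rw [mul_add, ← mul_assoc, ← mul_assoc, hx, ha.2]⟩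
  rw [star_add, star_mul, star_mul, star_star, ha.1]
  noncomm_ring

theorem sub_star_mem_skewCorner {z : R} (hz : e * z = z) (hz' : z * star e = z) :
    z - star z ∈ skewCorner e := by
  refine ⟨by rw [star_sub, star_star, neg_sub], ?_⟩
  rw [mul_sub, hz, ← star_star e, ← star_mul, hz']

section LieIdeal

attribute [local instance] LieRing.ofAssociativeRing

variable (he : IsIdempotentElem e)

theorem ofCorner_toCorner_mul_of_mem_skewCorner {a b : R} (ha : a ∈ skewCorner e)
    (hb : b ∈ skewCorner (star e)) : ofCorner he (toCorner he (a * b)) = a * b := by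
  rw [ofCorner_toCorner, ← mul_assoc, ha.2, mul_assoc, mul_of_mem_skewCorner_star hb]

theorem ofCorner_mul_add_mul_star_mem_skewCorner {a : R} (ha : a ∈ skewCorner e) (x : he.Corner) :
    ofCorner he x * a + a * star (ofCorner he x) ∈ skewCorner e :=
  mul_add_mul_star_mem_skewCorner ha (mul_ofCorner he x)

theorem star_ofCorner_mul_add_mul_mem_skewCorner {b : R} (hb : b ∈ skewCorner (star e))
    (x : he.Corner) :
    star (ofCorner he x) * b + b * ofCorner he x ∈ skewCorner (star e) := by
  have hx : star e * star (ofCorner he x) = star (ofCorner he x) := by rw [← star_mul, ofCorner_mul]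
  simpa only [star_star] using mul_add_mul_star_mem_skewCorner hb hx

theorem lie_toCorner_mul {a b : R} (ha : a ∈ skewCorner e) (hb : b ∈ skewCorner (star e))
    (x : he.Corner) :
    ⁅x, toCorner he (a * b)⁆ =
      toCorner he ((ofCorner he x * a + a * star (ofCorner he x)) * b) -
        toCorner he (a * (star (ofCorner he x) * b + b * ofCorner he x)) := by
  apply ofCorner_injective he
  rw [Ring.lie_def, map_sub, map_sub, map_mul (ofCorner he), map_mul (ofCorner he),
    ofCorner_toCorner_mul_of_mem_skewCorner he ha hb,
    ofCorner_toCorner_mul_of_mem_skewCorner he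
      (ofCorner_mul_add_mul_star_mem_skewCorner he ha x) hb,
    ofCorner_toCorner_mul_of_mem_skewCorner he ha
      (star_ofCorner_mul_add_mul_mem_skewCorner he hb x)]
  noncomm_ring

/-- The Lie ideal of the corner `eRe` spanned by the products of a skew element of `e R e*` and a
skew element of `e* R e`. -/
def skewCornerLieIdeal : LieIdeal ℤ he.Corner where
  __ := Submodule.span ℤ (Set.image2 (fun a b => toCorner he (a * b)) (skewCorner e)
    (skewCorner (star e)))
  lie_mem {x p} (hp : p ∈ Submodule.span _ _) := show ⁅x, p⁆ ∈ Submodule.span _ _ by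
    induction hp using Submodule.span_induction with
    | mem p hp =>
      obtain ⟨a, ha, b, hb, rfl⟩ := hp
      rw [lie_toCorner_mul he ha hb]
      exact sub_mem
        (Submodule.subset_span ⟨_, ofCorner_mul_add_mul_star_mem_skewCorner he ha x, b, hb, rfl⟩)
        (Submodule.subset_span ⟨a, ha, _, star_ofCorner_mul_add_mul_mem_skewCorner he hb x, rfl⟩)
    | zero => rw [lie_zero]; exact zero_mem _
    | add p q _ _ hp hq => rw [lie_add]; exact add_mem hp hq
    | smul n p _ hp => rw [lie_smul]; exact Submodule.smul_mem _ n hp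

theorem toCorner_mul_mem_skewCornerLieIdeal {a b : R} (ha : a ∈ skewCorner e)
    (hb : b ∈ skewCorner (star e)) : toCorner he (a * b) ∈ skewCornerLieIdeal he :=
  Submodule.subset_span ⟨a, ha, b, hb, rfl⟩

theorem skewCornerLieIdeal_subset_closure :
    (skewCornerLieIdeal he : Set he.Corner) ⊆
      (NonUnitalSubring.closure (skewCorner e ∪ skewCorner (star e) : Set R)).comap
        (ofCorner he) := fun p hp => by
  induction hp using Submodule.span_induction with
  | mem p hp =>
    obtain ⟨a, ha, b, hb, rfl⟩ := hp
    rw [SetLike.mem_coe, NonUnitalSubring.mem_comap,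
      ofCorner_toCorner_mul_of_mem_skewCorner he ha hb]
    exact mul_mem (NonUnitalSubring.subset_closure (.inl ha))
      (NonUnitalSubring.subset_closure (.inr hb))
  | zero => exact zero_mem _
  | add p q _ _ hp hq => exact add_mem hp hq
  | smul n p _ hp => exact zsmul_mem hp n

end LieIdeal

variable [IsSimpleRing R]

theorem finite_center_of_skewCorner_eq_bot (he : IsIdempotentElem e) (he0 : e ≠ 0)
    (h : skewCorner e = ⊥) : Module.Finite (Subring.center R) R := by
  have isSelfAdjoint : ∀ {w}, e * w = w → w * star e = w → star w = w := fun hew hwe =>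
    (sub_eq_zero.1 <| (AddSubgroup.eq_bot_iff_forall _).1 h _
      (sub_star_mem_skewCorner hew hwe)).symm
  have ofCorner_mul_eq : ∀ (x : he.Corner) {w}, e * w = w → w * star e = w →
      ofCorner he x * w = w * star (ofCorner he x) := fun x w hew hwe => by
    rw [← isSelfAdjoint (w := ofCorner he x * w) (by rw [← mul_assoc, mul_ofCorner])
      (by rw [mul_assoc, hwe]), star_mul, isSelfAdjoint hew hwe]
  have mul_comm_corner : ∀ x y : he.Corner, x * y = y * x := fun x y => by
    refine ofCorner_injective he (sub_eq_zero.1 ?_)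
    refine (eq_zero_or_eq_zero_of_forall_mul_mul_eq_zero fun r => ?_).resolve_right
      (star_ne_zero.2 he0)
    let w := e * r * star e
    have hew : e * w = w := by simp only [w, ← mul_assoc, he.eq]
    have hwe : w * star e = w := by simp only [w, mul_assoc, he.star.eq]
    have mul_mul_w : ofCorner he x * (ofCorner he y * w) = ofCorner he y * (ofCorner he x * w) := by
      calc ofCorner he x * (ofCorner he y * w) = ofCorner he y * w * star (ofCorner he x) :=
            ofCorner_mul_eq x (by rw [← mul_assoc, mul_ofCorner]) (by rw [mul_assoc, hwe])
        _ = ofCorner he y * (ofCorner he x * w) := by rw [mul_assoc, ofCorner_mul_eq x hew hwe]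
    calc (ofCorner he (x * y) - ofCorner he (y * x)) * r * star e =
          ofCorner he x * (ofCorner he y * w) - ofCorner he y * (ofCorner he x * w) := by
          simp only [w, map_mul, sub_mul, ← mul_assoc, ofCorner_mul]
      _ = 0 := sub_eq_zero.2 mul_mul_w
  exact finite_center_of_finite_center_corner he he0 (finite_center_of_forall_mem_center fun x =>
    Subring.mem_center_iff.2 fun y => mul_comm_corner y x)

theorem skewCorner_eq_bot_or_skewCorner_star_eq_bot (he : IsIdempotentElem e)
    (h : ∀ a ∈ skewCorner e, ∀ b ∈ skewCorner (star e), a * b = 0) :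
    skewCorner e = ⊥ ∨ skewCorner (star e) = ⊥ := by
  simp only [AddSubgroup.eq_bot_iff_forall]
  by_contra! hne
  obtain ⟨⟨a, ha, ha0⟩, b, hb, hb0⟩ := hne
  refine (eq_zero_or_eq_zero_of_forall_mul_mul_eq_zero fun r => ?_).elim ha0 hb0
  have hr : (e * star r * a + a * star (e * star r)) * b = 0 :=
    h _ (mul_add_mul_star_mem_skewCorner ha (by rw [← mul_assoc, he.eq])) b hb
  rwa [add_mul, mul_assoc, h a ha b hb, mul_zero, zero_add, star_mul, star_star, ← mul_assoc,
    mul_assoc, hb.2] at hr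

theorem finite_center_corner_of_forall_toCorner_mul_mem_center (he : IsIdempotentElem e) {a b : R}
    (ha : a ∈ skewCorner e) (hb : b ∈ skewCorner (star e)) (hab : a * b ≠ 0)
    (h : ∀ a' ∈ skewCorner e, toCorner he (a' * b) ∈ Subring.center he.Corner) :
    Module.Finite (Subring.center he.Corner) he.Corner := by
  have he0 : e ≠ 0 := by
    rintro rfl
    exact hab (by rw [← ha.2, zero_mul, zero_mul])
  have := isSimpleRing_corner he he0
  let δ (a' : R) (x : he.Corner) : R := ofCorner he x * a' + a' * star (ofCorner he x)
  let τ (x : he.Corner) : he.Corner := toCorner he (δ a x * b)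
  have hδ : ∀ {a'}, a' ∈ skewCorner e → ∀ x, δ a' x ∈ skewCorner e :=
    ofCorner_mul_add_mul_star_mem_skewCorner he
  have hτ : ∀ x, τ x ∈ Subring.center he.Corner := fun x => h _ (hδ ha x)
  have hc : toCorner he (a * b) ≠ 0 := fun hc => hab <| by
    rw [← ofCorner_toCorner_mul_of_mem_skewCorner he ha hb, hc, map_zero]
  refine finite_center_of_forall_mul_add_mul_sub_mem_center (h a ha) hc hτ fun x y => ?_
  have hxy : x * τ y + y * τ x - (x * y + y * x) * toCorner he (a * b) =
      toCorner he (δ (δ a y) x * b) - τ (x * y) := by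
    apply ofCorner_injective he
    simp only [τ, map_add, map_sub, map_mul, ofCorner_toCorner_mul_of_mem_skewCorner he
      (hδ ha _) hb, ofCorner_toCorner_mul_of_mem_skewCorner he (hδ (hδ ha _) _) hb,
      ofCorner_toCorner_mul_of_mem_skewCorner he ha hb]
    simp only [δ, map_mul, star_mul]
    noncomm_ring
  rw [hxy]
  exact sub_mem (h _ (hδ (hδ ha y) x)) (hτ (x * y))

theorem finite_center_of_skewCornerLieIdeal_subset_center (he : IsIdempotentElem e) (he0 : e ≠ 0)
    (h : (skewCornerLieIdeal he : Set he.Corner) ⊆ Subring.center he.Corner) :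
    Module.Finite (Subring.center R) R := by
  by_cases hmul : ∀ a ∈ skewCorner e, ∀ b ∈ skewCorner (star e), a * b = 0
  · rcases skewCorner_eq_bot_or_skewCorner_star_eq_bot he hmul with hbot | hbot
    · exact finite_center_of_skewCorner_eq_bot he he0 hbot
    · exact finite_center_of_skewCorner_eq_bot he.star (star_ne_zero.2 he0) hbot
  · push Not at hmul
    obtain ⟨a, ha, b, hb, hab⟩ := hmul
    exact finite_center_of_finite_center_corner he he0 <|
      finite_center_corner_of_forall_toCorner_mul_mem_center he ha hb hab fun a' ha' =>
        h (toCorner_mul_mem_skewCornerLieIdeal he ha' hb)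

theorem mul_mul_mem_closure_skewCorner (he : IsIdempotentElem e) (h2 : (2 : R) ≠ 0) (he0 : e ≠ 0)
    (hinf : ¬ Module.Finite (Subring.center R) R) (r : R) :
    e * r * e ∈ NonUnitalSubring.closure (skewCorner e ∪ skewCorner (star e) : Set R) := by
  have := isSimpleRing_corner he he0
  have h2' : (2 : he.Corner) ≠ 0 := fun h => he0 <| eq_zero_of_two_mul_eq_zero h2 <| by
    rw [two_mul, ← ofCorner_one he, ← map_add, one_add_one_eq_two, h, map_zero]
  have htop := (lieIdeal_subset_center_or_closure_eq_top h2' (skewCornerLieIdeal he)).resolve_left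
    fun hcenter => hinf (finite_center_of_skewCornerLieIdeal_subset_center he he0 hcenter)
  exact NonUnitalSubring.closure_le.2 (skewCornerLieIdeal_subset_closure he)
    (htop ▸ NonUnitalSubring.mem_top (toCorner he r))

theorem exists_mem_skewCorner_ne_zero (he : IsIdempotentElem e) (he0 : e ≠ 0)
    (hinf : ¬ Module.Finite (Subring.center R) R) : ∃ a ∈ skewCorner e, a ≠ 0 := by
  by_contra! h
  exact hinf (finite_center_of_skewCorner_eq_bot he he0 ((AddSubgroup.eq_bot_iff_forall _).2 h))

theorem mul_mul_star_mem_closure_skewCorner (he : IsIdempotentElem e) (h2 : (2 : R) ≠ 0)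
    (he0 : e ≠ 0) (hinf : ¬ Module.Finite (Subring.center R) R) (r : R) :
    e * r * star e ∈ NonUnitalSubring.closure (skewCorner e ∪ skewCorner (star e) : Set R) := by
  obtain ⟨a, ha, ha0⟩ := exists_mem_skewCorner_ne_zero he he0 hinf
  refine mul_mul_mem_of_forall_mul_mul_mem ha0 (NonUnitalSubring.subset_closure (.inl ha)) ha.2
    (mul_star_of_mem_skewCorner ha) (mul_mul_mem_closure_skewCorner he h2 he0 hinf) (fun s => ?_) r
  have := mul_mul_mem_closure_skewCorner he.star h2 (star_ne_zero.2 he0) hinf s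
  rwa [star_star, Set.union_comm] at this

end SkewCorner

theorem simple_algebra_generated_by_skew_corners_general {R : Type*} [Ring R] [StarRing R]
    [IsSimpleRing R] (h2 : (2 : R) ≠ 0) {e : R} (he : IsIdempotentElem e) (hsum : e + star e = 1)
    (hinf : ¬ Module.Finite (Subring.center R) R) :
    NonUnitalSubring.closure
        ({a : R | star a = -a ∧ ∃ r : R, a = e * r * star e} ∪
          {a : R | star a = -a ∧ ∃ r : R, a = star e * r * e}) = ⊤ := by
  have he0 : e ≠ 0 := by
    rintro rfl
    simp at hsum
  have hX : {a : R | star a = -a ∧ ∃ r : R, a = e * r * star e} = skewCorner e :=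
    Set.ext fun a => (mem_skewCorner_iff_exists he).symm
  have hY : {a : R | star a = -a ∧ ∃ r : R, a = star e * r * e} = skewCorner (star e) :=
    Set.ext fun a => by simpa using (mem_skewCorner_iff_exists he.star).symm
  rw [hX, hY]
  refine eq_top_iff.2 fun x _ => ?_
  have peirce : x = e * x * e + e * x * star e + (star e * x * star e + star e * x * e) := by
    calc x = (e + star e) * x * (e + star e) := by rw [hsum, one_mul, mul_one]
      _ = _ := by noncomm_ring
  have hstar := add_mem
    (mul_mul_mem_closure_skewCorner he.star h2 (star_ne_zero.2 he0) hinf x)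
    (mul_mul_star_mem_closure_skewCorner he.star h2 (star_ne_zero.2 he0) hinf x)
  rw [star_star, Set.union_comm] at hstar
  rw [peirce]
  exact add_mem (add_mem (mul_mul_mem_closure_skewCorner he h2 he0 hinf x)
    (mul_mul_star_mem_closure_skewCorner he h2 he0 hinf x)) hstar

/-- **Lemma 8.**  Let `R` be a simple unital `F`-algebra with involution and an
idempotent `e` with `e e* = e* e = 0` and `e + e* = 1`, and suppose `R` is not
finite-dimensional over its center.  Then `R` is generated as an `F`-algebra by
`(K ∩ eRe*) ∪ (K ∩ e*Re)`. -/
theorem simple_algebra_generated_by_skew_corners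
    (F : Type*) [Field F] (hchar : (2 : F) ≠ 0)
    (R : Type*) [Ring R] [Algebra F R] [IsSimpleRing R]
    (st : R →ₗ[F] R)
    (hst_mul : ∀ a b : R, st (a * b) = st b * st a)
    (hst_inv : ∀ a : R, st (st a) = a)
    (e : R) (he : e * e = e)
    (hee : e * st e = 0) (hee' : st e * e = 0)
    (hsum : e + st e = 1)
    (hinf : ¬ Module.Finite (Subring.center R) R) :
    Algebra.adjoin F
        ({a : R | st a = -a ∧ ∃ r : R, a = e * r * st e} ∪
          {a : R | st a = -a ∧ ∃ r : R, a = st e * r * e}) = ⊤ := by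
  let : StarRing R :=
    { star := st
      star_involutive := hst_inv
      star_mul := hst_mul
      star_add := map_add st }
  have h2 : (2 : R) ≠ 0 := by
    rw [← map_ofNat (algebraMap F R) 2]
    exact (map_ne_zero (algebraMap F R)).2 hchar
  refine eq_top_iff.2 fun x _ => ?_
  have hx := (simple_algebra_generated_by_skew_corners_general h2 he hsum hinf).ge
    (NonUnitalSubring.mem_top x)
  exact NonUnitalSubring.closure_le (t := (Algebra.adjoin F _).toSubring.toNonUnitalSubring).2
    Algebra.subset_adjoin hx
end

section
/- Let m ≥ 1 and let A = F⟨x₁,…,x_m⟩ be the free unital associative F-algebra on generators x₁,…,x_m. Let σ : A → A be an F-linear map satisfying σ(ab) = σ(b)σ(a) for all a,b ∈ A, σ(1) = 1, and σ(x_i) = −x_i for each i (such σ exists, is unique, and satisfies σ² = id), and let K = {a ∈ A : σ(a) = −a}. For each i and a₁,a₂,a₃ ∈ K define f(x_i,a₁) = x_i a₁ x_i, f(x_i,a₁,a₂) = f(x_i,a₁) a₂ f(x_i,a₁), and f(x_i,a₁,a₂,a₃) = f(x_i,a₁,a₂) a₃ f(x_i,a₁,a₂). Let I be the two-sided ideal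 of A generated by all elements f(x_i,a₁,a₂,a₃) with 1 ≤ i ≤ m and a₁,a₂,a₃ ∈ K. Then there exists a positive integer d such that every product x_{i₁} x_{i₂} ⋯ x_{i_d} of d generators lies in I. -/
/-!
A semiprime ideal `P` contains every `x` with `x * a * x * a * x ∈ P` for all `a`: linearising in
`a` and substituting `c * x * a` for the second variable gives `(x * a * x) * c * (x * a * x) ∈ P`,
and semiprimeness applies twice. For an anti-automorphism `σ` of order two and a skew `x`, both
`a - σ a` and `a * x * σ a` are skew, so it is enough that `x * a * x ∈ P` for all *skew* `a`.
Peeling off one skew element at a time, a semiprime ideal containing all iterated sandwiches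
`f(x, a₁, …, aₙ)` contains `x`.

To descend to the ideal `I` generated by the sandwiches, take an ideal `P ⊇ I` maximal among those
containing no power `s ^ d` of the finite set `s` of generators. Such a `P` is semiprime, hence
contains `s`, which is absurd.
-/

open scoped Pointwise

theorem finite_set_pow {M : Type*} [Monoid M] {s : Set M} (hs : s.Finite) (n : ℕ) :
    (s ^ n).Finite := by
  induction n with
  | zero => simpa only [pow_zero] using Set.finite_one
  | succ n ih => simpa only [pow_succ] using ih.mul hs

theorem coe_sSup_of_directedOn {R : Type*} [NonUnitalNonAssocRing R] {c : Set (TwoSidedIdeal R)}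
    (hne : c.Nonempty) (hc : DirectedOn (· ≤ ·) c) :
    ((sSup c : TwoSidedIdeal R) : Set R) = ⋃ I ∈ c, (I : Set R) := by
  refine Set.Subset.antisymm ?_ (Set.iUnion₂_subset fun I hI => le_sSup hI)
  let U : TwoSidedIdeal R := .mk' (⋃ I ∈ c, (I : Set R))
    (by
      obtain ⟨I, hI⟩ := hne
      exact Set.mem_biUnion hI I.zero_mem)
    (by
      simp only [Set.mem_iUnion₂]
      rintro x y ⟨I, hI, hx⟩ ⟨J, hJ, hy⟩
      obtain ⟨K, hK, hIK, hJK⟩ := hc I hI J hJ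
      exact ⟨K, hK, K.add_mem (hIK hx) (hJK hy)⟩)
    (by
      simp only [Set.mem_iUnion₂]
      exact fun ⟨I, hI, hx⟩ => ⟨I, hI, I.neg_mem hx⟩)
    (by
      simp only [Set.mem_iUnion₂]
      exact fun ⟨I, hI, hy⟩ => ⟨I, hI, I.mul_mem_left _ _ hy⟩)
    (by
      simp only [Set.mem_iUnion₂]
      exact fun ⟨I, hI, hx⟩ => ⟨I, hI, I.mul_mem_right _ _ hx⟩)
  have hU : (U : Set R) = ⋃ I ∈ c, (I : Set R) := TwoSidedIdeal.coe_mk' ..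
  rw [← hU]
  refine TwoSidedIdeal.le_iff.1 (sSup_le fun I hI => TwoSidedIdeal.le_iff.2 ?_)
  rw [hU]
  exact Set.subset_biUnion_of_mem hI

section SemiprimeIdeal

variable {R : Type*} [Ring R] {P : TwoSidedIdeal R}

theorem mul_mem_of_mem_span_singleton {a b u v : R} (h : ∀ r, a * r * b ∈ P)
    (hu : u ∈ TwoSidedIdeal.span {a}) (hv : v ∈ TwoSidedIdeal.span {b}) : u * v ∈ P := by
  rw [TwoSidedIdeal.mem_span_iff_mem_addSubgroup_closure] at hu hv
  induction hu using AddSubgroup.closure_induction with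
  | mem u hu =>
    obtain ⟨_, ⟨p, -, _, rfl, rfl⟩, q, -, rfl⟩ := hu
    induction hv using AddSubgroup.closure_induction with
    | mem v hv =>
      obtain ⟨_, ⟨r, -, _, rfl, rfl⟩, t, -, rfl⟩ := hv
      simpa only [mul_assoc] using P.mul_mem_right _ t (P.mul_mem_left p _ (h (q * r)))
    | zero => simpa only [mul_zero] using P.zero_mem
    | add _ _ _ _ h₁ h₂ => simpa only [mul_add] using P.add_mem h₁ h₂
    | neg _ _ h' => simpa only [mul_neg] using P.neg_mem h'
  | zero => simpa only [zero_mul] using P.zero_mem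
  | add _ _ _ _ h₁ h₂ => simpa only [add_mul] using P.add_mem h₁ h₂
  | neg _ _ h' => simpa only [neg_mul] using P.neg_mem h'

theorem mul_mem_of_mem_sup_span_singleton {a b u v : R} (h : ∀ r, a * r * b ∈ P)
    (hu : u ∈ P ⊔ TwoSidedIdeal.span {a}) (hv : v ∈ P ⊔ TwoSidedIdeal.span {b}) : u * v ∈ P := by
  obtain ⟨p, hp, s, hs, rfl⟩ := TwoSidedIdeal.mem_sup.1 hu
  obtain ⟨q, hq, t, ht, rfl⟩ := TwoSidedIdeal.mem_sup.1 hv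
  rw [add_mul, mul_add s]
  exact P.add_mem (P.mul_mem_right _ _ hp)
    (P.add_mem (P.mul_mem_left _ _ hq) (mul_mem_of_mem_span_singleton h hs ht))

theorem exists_le_maximal_forall_not_pow_subset {s : Set R} (hs : s.Finite) {I : TwoSidedIdeal R}
    (hI : ∀ d : ℕ, ¬ s ^ d ⊆ I) :
    ∃ P, I ≤ P ∧ Maximal (fun J : TwoSidedIdeal R => ∀ d : ℕ, ¬ s ^ d ⊆ J) P := by
  refine zorn_le_nonempty₀ {J : TwoSidedIdeal R | ∀ d : ℕ, ¬ s ^ d ⊆ J} ?_ I hI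
  intro c hc hchain J hJ
  refine ⟨sSup c, fun d hd => ?_, fun _ => le_sSup⟩
  rw [coe_sSup_of_directedOn ⟨J, hJ⟩ hchain.directedOn] at hd
  obtain ⟨L, hL, hdL⟩ := DirectedOn.exists_mem_subset_of_finset_subset_biUnion ⟨J, hJ⟩
    (s := (finite_set_pow hs d).toFinset) (f := fun I : TwoSidedIdeal R => (I : Set R))
    hchain.directedOn (by simpa using hd)
  exact hc hL d (by simpa using hdL)

/-- Semiprimeness of a two-sided ideal of a noncommutative ring, stated on elements; the whole ring
counts as semiprime. Nilpotency of a finite set modulo an ideal is tested on these. -/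
def IsSemiprimeIdeal (P : TwoSidedIdeal R) : Prop :=
  ∀ a : R, (∀ r, a * r * a ∈ P) → a ∈ P

theorem isSemiprimeIdeal_of_maximal_forall_not_pow_subset {s : Set R}
    (hP : Maximal (fun J : TwoSidedIdeal R => ∀ d : ℕ, ¬ s ^ d ⊆ J) P) : IsSemiprimeIdeal P := by
  intro a ha
  by_contra haP
  have hlt : P < P ⊔ TwoSidedIdeal.span {a} :=
    left_lt_sup.2 fun h => haP (h (TwoSidedIdeal.subset_span rfl))
  obtain ⟨d, hd⟩ : ∃ d : ℕ, s ^ d ⊆ ↑(P ⊔ TwoSidedIdeal.span {a}) := by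
    simpa using hP.not_prop_of_gt hlt
  refine hP.prop (d + d) ?_
  rw [pow_add, Set.mul_subset_iff]
  exact fun u hu v hv => mul_mem_of_mem_sup_span_singleton ha (hd hu) (hd hv)

theorem exists_pos_pow_subset_of_forall_isSemiprimeIdeal {s : Set R} (hs : s.Finite)
    {I : TwoSidedIdeal R} (h : ∀ P, I ≤ P → IsSemiprimeIdeal P → s ⊆ P) :
    ∃ d : ℕ, 0 < d ∧ s ^ d ⊆ I := by
  obtain ⟨d, hd⟩ : ∃ d : ℕ, s ^ d ⊆ I := by
    by_contra! hI
    obtain ⟨P, hIP, hP⟩ := exists_le_maximal_forall_not_pow_subset hs hI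
    refine hP.prop 1 ?_
    simpa only [pow_one] using h P hIP (isSemiprimeIdeal_of_maximal_forall_not_pow_subset hP)
  refine ⟨d + 1, d.succ_pos, ?_⟩
  rw [pow_succ, Set.mul_subset_iff]
  exact fun u hu v _ => I.mul_mem_right u v (hd hu)

theorem IsSemiprimeIdeal.mem_of_forall_mul_mul_mul_mul_mem (hP : IsSemiprimeIdeal P) {x : R}
    (h : ∀ a, x * a * x * a * x ∈ P) : x ∈ P := by
  have linearized (a b : R) : x * a * x * b * x + x * b * x * a * x ∈ P := by
    convert P.sub_mem (P.sub_mem (h (a + b)) (h a)) (h b) using 1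
    noncomm_ring
  refine hP x fun a => hP (x * a * x) fun c => ?_
  convert P.sub_mem (linearized a (c * x * a)) (P.mul_mem_left (x * c) _ (h a)) using 1
  noncomm_ring

end SemiprimeIdeal

section IteratedSandwich

variable {R : Type*} [Ring R]

/-- The element `f(x, a₁, …, aₙ)` attached to `x` and the list `[a₁, …, aₙ]`: start from `x` and
replace the current value `y` successively by `y * a₁ * y`, …, `y * aₙ * y`. The case
`n = 3` gives the generators of the ideal in Lemma 10. -/
def iteratedSandwich (x : R) (l : List R) : R :=
  l.foldl (fun y a => y * a * y) x

theorem map_mul_mul_eq_neg_of_skew {σ : R →+ R} (hmul : ∀ a b, σ (a * b) = σ b * σ a) {x a : R}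
    (hx : σ x = -x) (ha : σ a = -a) : σ (x * a * x) = -(x * a * x) := by
  simp only [hmul, hx, ha, neg_mul, mul_neg, neg_neg, mul_assoc]

namespace IsSemiprimeIdeal

variable {P : TwoSidedIdeal R} {σ : R →+ R} {x : R}

theorem mem_of_forall_skew_mul_mul_mem (hP : IsSemiprimeIdeal P)
    (hmul : ∀ a b, σ (a * b) = σ b * σ a) (hinv : Function.Involutive σ) (hx : σ x = -x)
    (h : ∀ a, σ a = -a → x * a * x ∈ P) : x ∈ P := by
  refine hP.mem_of_forall_mul_mul_mul_mul_mem fun a => ?_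
  have h_sub : x * (a - σ a) * x ∈ P := h _ (by rw [map_sub, hinv, neg_sub])
  have h_conj : x * (a * x * σ a) * x ∈ P :=
    h _ (by simp only [hmul, hinv a, hx, neg_mul, mul_neg, mul_assoc])
  convert P.add_mem (P.mul_mem_left (x * a) _ h_sub) h_conj using 1
  noncomm_ring

theorem mem_of_forall_iteratedSandwich_mem (hP : IsSemiprimeIdeal P)
    (hmul : ∀ a b, σ (a * b) = σ b * σ a) (hinv : Function.Involutive σ) (hx : σ x = -x) (n : ℕ)
    (h : ∀ l : List R, l.length = n → (∀ a ∈ l, σ a = -a) → iteratedSandwich x l ∈ P) :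
    x ∈ P := by
  induction n generalizing x with
  | zero => exact h [] rfl (by simp)
  | succ n ih =>
    refine hP.mem_of_forall_skew_mul_mul_mem hmul hinv hx fun a ha => ?_
    refine ih (map_mul_mul_eq_neg_of_skew hmul hx ha) fun l hl hskew => ?_
    exact h (a :: l) (by rw [List.length_cons, hl]) (List.forall_mem_cons.2 ⟨ha, hskew⟩)

end IsSemiprimeIdeal

end IteratedSandwich

theorem freeAlgebra_involutive_of_map_ι_eq_neg {F X : Type*} [CommRing F]
    {σ : FreeAlgebra F X →ₗ[F] FreeAlgebra F X} (hmul : ∀ a b, σ (a * b) = σ b * σ a)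
    (hone : σ 1 = 1) (hgen : ∀ i, σ (FreeAlgebra.ι F i) = -FreeAlgebra.ι F i) :
    Function.Involutive σ := by
  intro a
  induction a using FreeAlgebra.induction with
  | grade0 r => simp [Algebra.algebraMap_eq_smul_one, hone]
  | grade1 i => simp [hgen]
  | mul a b ha hb => rw [hmul, hmul, ha, hb]
  | add a b ha hb => rw [map_add, map_add, ha, hb]

theorem free_algebra_quotient_nilpotent_general {R : Type*} [Ring R] {σ : R →+ R}
    (hmul : ∀ a b, σ (a * b) = σ b * σ a) (hinv : Function.Involutive σ) {s : Set R}
    (hs : s.Finite) (hskew : ∀ x ∈ s, σ x = -x) (n : ℕ) :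
    ∃ d : ℕ, 0 < d ∧ s ^ d ⊆ TwoSidedIdeal.span
      {y | ∃ x ∈ s, ∃ l : List R, l.length = n ∧ (∀ a ∈ l, σ a = -a) ∧
        y = iteratedSandwich x l} :=
  exists_pos_pow_subset_of_forall_isSemiprimeIdeal hs fun _ hIP hP x hx =>
    hP.mem_of_forall_iteratedSandwich_mem hmul hinv (hskew x hx) n fun l hl hl_skew =>
      hIP (TwoSidedIdeal.subset_span ⟨x, hx, l, hl, hl_skew, rfl⟩)

/-- **Lemma 10.**  Let `A = F⟨x₁,…,x_m⟩` be the free unital associative `F`-algebra,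
`σ` the involution with `σ(x_i) = -x_i`, and `K` the skew elements.  Let `I` be the
two-sided ideal generated by all `f(x_i,a₁,a₂,a₃)` with `a₁,a₂,a₃ ∈ K`, where
`f(x_i,a₁) = x_i a₁ x_i`, `f(x_i,a₁,a₂) = f(x_i,a₁) a₂ f(x_i,a₁)` and
`f(x_i,a₁,a₂,a₃) = f(x_i,a₁,a₂) a₃ f(x_i,a₁,a₂)`.  Then some power of the augmentation
part vanishes mod `I`: there is `d > 0` such that every product of `d` generators lies
in `I`. -/
theorem free_algebra_quotient_nilpotent
    (F : Type*) [Field F] (hchar : (2 : F) ≠ 0)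
    (m : ℕ) (hm : 1 ≤ m)
    (σ : FreeAlgebra F (Fin m) →ₗ[F] FreeAlgebra F (Fin m))
    (hσ_mul : ∀ a b : FreeAlgebra F (Fin m), σ (a * b) = σ b * σ a)
    (hσ_one : σ 1 = 1)
    (hσ_gen : ∀ i : Fin m, σ (FreeAlgebra.ι F i) = -FreeAlgebra.ι F i) :
    ∃ d : ℕ, 0 < d ∧ ∀ w : Fin d → Fin m,
      (List.ofFn fun t : Fin d => FreeAlgebra.ι F (w t)).prod ∈
        TwoSidedIdeal.span
          {y : FreeAlgebra F (Fin m) | ∃ (i : Fin m) (a₁ a₂ a₃ : FreeAlgebra F (Fin m)),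
            σ a₁ = -a₁ ∧ σ a₂ = -a₂ ∧ σ a₃ = -a₃ ∧
            y = ((FreeAlgebra.ι F i * a₁ * FreeAlgebra.ι F i) * a₂ *
                  (FreeAlgebra.ι F i * a₁ * FreeAlgebra.ι F i)) * a₃ *
                ((FreeAlgebra.ι F i * a₁ * FreeAlgebra.ι F i) * a₂ *
                  (FreeAlgebra.ι F i * a₁ * FreeAlgebra.ι F i))} := by
  obtain ⟨d, hd, hpow⟩ := free_algebra_quotient_nilpotent_general (σ := σ.toAddMonoidHom) hσ_mul
    (freeAlgebra_involutive_of_map_ι_eq_neg hσ_mul hσ_one hσ_gen)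
    (Set.finite_range (FreeAlgebra.ι F)) (Set.forall_mem_range.2 hσ_gen) 3
  refine ⟨d, hd, fun w => TwoSidedIdeal.span_mono ?_
    (hpow (Set.mem_pow.2 ⟨fun t => ⟨_, Set.mem_range_self (w t)⟩, rfl⟩))⟩
  rintro _ ⟨_, ⟨i, rfl⟩, l, hl, hskew, rfl⟩
  obtain ⟨a₁, a₂, a₃, rfl⟩ := List.length_eq_three.1 hl
  exact ⟨i, a₁, a₂, a₃, hskew a₁ (by simp), hskew a₂ (by simp), hskew a₃ (by simp), rfl⟩
end
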